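/- arXiv:2603.08941 — 2 statements merged into one kernel-verified Lean document; each statement's English description precedes it below -/
import Mathlib

section
/- Let F be a finite field and let C_X, C_Z ⊆ F^n be linear codes with C_Z^⊥ ⊆ C_X and C_X^⊥ ⊆ C_Z (i.e., (C_X, C_Z) is a CSS code). Let k = dim(C_X) and k' = k − dim(C_Z^⊥). Let G ∈ F^{n×k} be a generator matrix for C_X whose last k−k' columns form a basis for C_Z^⊥, and let Enc be the k'-randomized encoding map for G. Let d_X be the minimum Hamming weight of a vector in C_X \ C_Z^⊥. Then for every e ∈ ℕ: d_X > 2e if and only if Enc is decodable from e errors. -/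
/-- Concatenation `(m, r) ∈ F^k` of a message `m ∈ F^{k'}` (first `k'` coordinates)
with randomness `r ∈ F^{k-k'}` (last `k - k'` coordinates). -/
def concat {F : Type*} {k k' : ℕ} (m : Fin k' → F) (r : Fin (k - k') → F) : Fin k → F :=
  fun j => if hj : (j : ℕ) < k' then m ⟨j, hj⟩
           else r ⟨(j : ℕ) - k', by have := j.isLt; omega⟩

/-- The orthogonal complement `W^⊥` of a subspace `W ⊆ F^n` with respect to the
bilinear form `⟨u,v⟩ = ∑ i, u i * v i`. -/
def dualCode {F : Type*} [Field F] {n : ℕ} (W : Submodule F (Fin n → F)) :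
    Submodule F (Fin n → F) where
  carrier := {u | ∀ w ∈ W, ∑ i, u i * w i = 0}
  add_mem' := by
    intro a b ha hb w hw
    simp only [Set.mem_setOf_eq] at *
    simp [Pi.add_apply, add_mul, Finset.sum_add_distrib, ha w hw, hb w hw]
  zero_mem' := by intro w hw; simp
  smul_mem' := by
    intro c a ha w hw
    simp only [Set.mem_setOf_eq] at *
    simp [Pi.smul_apply, smul_eq_mul, mul_assoc, ← Finset.mul_sum, ha w hw]

/-- The span of the last `k - k'` columns of `G` (the columns with index `≥ k'`). -/
def lastColSpan {F : Type*} [Field F] {n k : ℕ} (G : Matrix (Fin n) (Fin k) F) (k' : ℕ) :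
    Submodule F (Fin n → F) :=
  Submodule.span F {v | ∃ j : Fin k, k' ≤ (j : ℕ) ∧ v = fun i => G i j}

/-- The `k'`-randomized encoding map for `G` is decodable from `e` errors: there is a
deterministic decoder `D` recovering `m` from `G·(m,r) + y` whenever `wt(y) ≤ e`. -/
def DecodableFromErrors {F : Type*} [Field F] [DecidableEq F] {n k : ℕ}
    (G : Matrix (Fin n) (Fin k) F) (k' e : ℕ) : Prop :=
  ∃ D : (Fin n → F) → (Fin k' → F),
    ∀ (m : Fin k' → F) (r : Fin (k - k') → F) (y : Fin n → F),
      hammingNorm y ≤ e → D (G.mulVec (concat m r) + y) = m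

/-- The `k'`-randomized encoding map for `G` is `t`-zero-knowledge: for every set `I` of `t`
coordinates and every pair of messages `m, m'`, the restrictions `Enc(m)|_I` and `Enc(m')|_I`
are identically distributed (over uniformly random `r`), i.e. each value `v ∈ F^I` is hit by
the same number of choices of randomness `r`. -/
def IsZK {F : Type*} [Field F] {n k : ℕ} (G : Matrix (Fin n) (Fin k) F) (k' t : ℕ) : Prop :=
  ∀ I : Finset (Fin n), I.card = t →
    ∀ m m' : Fin k' → F, ∀ v : {i // i ∈ I} → F,
      Nat.card {r : Fin (k - k') → F //
          ∀ i : {i // i ∈ I}, G.mulVec (concat m r) i.1 = v i} =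
      Nat.card {r : Fin (k - k') → F //
          ∀ i : {i // i ∈ I}, G.mulVec (concat m' r) i.1 = v i}

/-! Any two vectors at Hamming distance at most `2 e` have a vector within `e` of both, so a decoder
exists iff encodings of distinct messages are more than `2 e` apart. By linearity this says that
`G x` has weight more than `2 e` whenever the message part of `x` is nonzero. Since `G` is
injective, the message part is nonzero exactly when `G x` lies outside the span of the last
columns. -/

section Hamming

variable {ι : Type*} {β : ι → Type*} [Fintype ι] [∀ i, DecidableEq (β i)]

theorem exists_hammingDist_le_of_le_add {x y : ∀ i, β i} {a b : ℕ} (h : hammingDist x y ≤ a + b) :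
    ∃ z, hammingDist x z ≤ a ∧ hammingDist z y ≤ b := by
  classical
  let differing : Finset ι := {i | x i ≠ y i}
  have hcard : differing.card = hammingDist x y := rfl
  obtain ⟨S, hS, hScard⟩ := differing.exists_subset_card_eq (Nat.min_le_right a _)
  refine ⟨S.piecewise y x, ?_, ?_⟩
  · calc hammingDist x (S.piecewise y x)
        ≤ S.card := Finset.card_le_card fun i hi ↦ by
          by_contra hiS
          simp [hiS] at hi
      _ ≤ a := by lia
  · calc hammingDist (S.piecewise y x) y
        ≤ (differing \ S).card := Finset.card_le_card fun i hi ↦ by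
          by_cases hiS : i ∈ S <;> simp_all [differing]
      _ ≤ b := by
          rw [Finset.card_sdiff_of_subset hS]
          lia

theorem exists_decoder_iff_hammingDist {X M : Type*} [Nonempty M] (E : X → ∀ i, β i) (f : X → M)
    (e : ℕ) :
    (∃ D : (∀ i, β i) → M, ∀ x z, hammingDist (E x) z ≤ e → D z = f x) ↔
      ∀ x x', hammingDist (E x) (E x') ≤ 2 * e → f x = f x' := by
  constructor
  · rintro ⟨D, hD⟩ x x' h
    obtain ⟨z, hxz, hzx'⟩ := exists_hammingDist_le_of_le_add (h.trans_eq (two_mul e))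
    rw [← hD x z hxz, hD x' z (by rwa [hammingDist_comm])]
  · intro h
    let received : {p : X × ∀ i, β i // hammingDist (E p.1) p.2 ≤ e} → ∀ i, β i := fun p ↦ p.1.2
    have hfactor : Function.FactorsThrough (fun p ↦ f p.1.1) received := by
      rintro ⟨⟨x, z⟩, hx⟩ ⟨⟨x', _⟩, hx'⟩ (rfl : z = _)
      exact h x x' ((hammingDist_triangle_right _ _ z).trans (by lia))
    obtain ⟨D, hD⟩ := (Function.factorsThrough_iff _).mp hfactor
    exact ⟨D, fun x z hxz ↦ (congrFun hD ⟨(x, z), hxz⟩).symm⟩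

end Hamming

section Concat

variable {F : Type*} {k k' : ℕ}

theorem concat_comp_castLE (h : k' ≤ k) (m : Fin k' → F) (r : Fin (k - k') → F) :
    concat m r ∘ Fin.castLE h = m := by
  ext i
  simp [concat]

theorem exists_concat_eq (h : k' ≤ k) (x : Fin k → F) :
    ∃ (m : Fin k' → F) (r : Fin (k - k') → F), concat m r = x := by
  refine ⟨x ∘ Fin.castLE h, fun i ↦ x ⟨k' + i, by lia⟩, ?_⟩
  ext j
  unfold concat
  split_ifs with hj
  · rfl
  · exact congrArg x (Fin.ext (Nat.add_sub_of_le (not_lt.mp hj)))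

end Concat

section Encoding

variable {F : Type*} [Field F] {n k k' : ℕ} (G : Matrix (Fin n) (Fin k) F)

theorem lastColSpan_eq_map_spanSubset (k' : ℕ) :
    lastColSpan G k' = (Pi.spanSubset F {j : Fin k | k' ≤ j}).map G.mulVecLin := by
  rw [lastColSpan, Pi.spanSubset, Submodule.map_span, Set.image_image]
  congr 1
  ext v
  simp [Matrix.col_def, funext_iff, eq_comm]

variable {G} in
theorem mulVec_mem_lastColSpan_iff (hG : Function.Injective G.mulVecLin) (h : k' ≤ k)
    (x : Fin k → F) : G.mulVec x ∈ lastColSpan G k' ↔ x ∘ Fin.castLE h = 0 := by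
  rw [lastColSpan_eq_map_spanSubset, ← Matrix.mulVecLin_apply, ← SetLike.mem_coe,
    Submodule.map_coe, hG.mem_set_image, SetLike.mem_coe, Pi.mem_spanSubset_iff]
  constructor
  · intro hx
    ext i
    exact hx _ (not_le.mpr i.isLt)
  · intro hx j hj
    exact congrFun hx ⟨j, not_le.mp hj⟩

variable [DecidableEq F]

theorem decodableFromErrors_iff_exists_decoder (h : k' ≤ k) (e : ℕ) :
    DecodableFromErrors G k' e ↔ ∃ D : (Fin n → F) → (Fin k' → F),
      ∀ x z, hammingDist (G.mulVec x) z ≤ e → D z = x ∘ Fin.castLE h := by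
  refine exists_congr fun D ↦ ⟨fun hD x z hz ↦ ?_, fun hD m r y hy ↦ ?_⟩
  · obtain ⟨m, r, rfl⟩ := exists_concat_eq h x
    rw [hammingDist_eq_hammingNorm] at hz
    simpa [concat_comp_castLE] using hD m r _ hz
  · rw [hD (concat m r), concat_comp_castLE]
    rwa [hammingDist_eq_hammingNorm, neg_add_cancel_left]

theorem decodableFromErrors_iff_forall_hammingNorm_le (h : k' ≤ k) (e : ℕ) :
    DecodableFromErrors G k' e ↔
      ∀ x, hammingNorm (G.mulVec x) ≤ 2 * e → x ∘ Fin.castLE h = 0 := by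
  rw [decodableFromErrors_iff_exists_decoder G h, exists_decoder_iff_hammingDist]
  constructor
  · intro hE x hx
    exact hE x 0 (by simpa using hx)
  · intro hE x x' hxx'
    rw [hammingDist_eq_hammingNorm, neg_add_eq_sub, ← Matrix.mulVec_sub] at hxx'
    exact (sub_eq_zero.mp (hE (x' - x) hxx')).symm

end Encoding

theorem css_dX_iff_decodable_general {F : Type*} [Field F] [DecidableEq F] {n k k' : ℕ}
    (h : k' ≤ k) (G : Matrix (Fin n) (Fin k) F) (hG : Function.Injective G.mulVecLin) {d : ℕ}
    (hd : IsLeast {w | ∃ c, c ∈ LinearMap.range G.mulVecLin ∧ c ∉ lastColSpan G k' ∧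
      hammingNorm c = w} d) (e : ℕ) :
    2 * e < d ↔ DecodableFromErrors G k' e := by
  calc 2 * e < d
      ↔ ∀ x, G.mulVec x ∉ lastColSpan G k' → 2 * e < hammingNorm (G.mulVec x) := by
        rw [hd.lt_iff]
        simp
    _ ↔ ∀ x, hammingNorm (G.mulVec x) ≤ 2 * e → x ∘ Fin.castLE h = 0 := by
        simp only [mulVec_mem_lastColSpan_iff hG h, ← not_le, not_imp_not]
    _ ↔ DecodableFromErrors G k' e := (decodableFromErrors_iff_forall_hammingNorm_le G h e).symm

/-- Let `(C_X, C_Z)` be a CSS code (`C_Z^⊥ ⊆ C_X` and `C_X^⊥ ⊆ C_Z`),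
let `k = dim C_X`, `k' = k - dim C_Z^⊥`, and let `G` be a generator matrix for `C_X` whose
last `k - k'` columns form a basis for `C_Z^⊥`. With `d_X` the minimum Hamming weight of a
vector in `C_X \ C_Z^⊥`: for every `e ∈ ℕ`, `d_X > 2e` iff the `k'`-randomized encoding map
for `G` is decodable from `e` errors. -/
theorem css_dX_iff_decodable
    {F : Type*} [Field F] [Fintype F] [DecidableEq F] {n : ℕ}
    (CX CZ : Submodule F (Fin n → F))
    (hZX : dualCode CZ ≤ CX) (hXZ : dualCode CX ≤ CZ)
    (k k' : ℕ)
    (hk : k = Module.finrank F CX)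
    (hk' : k' = k - Module.finrank F (dualCode CZ))
    (G : Matrix (Fin n) (Fin k) F)
    (hGfullrank : Function.Injective G.mulVecLin)
    (hGspan : LinearMap.range G.mulVecLin = CX)
    (hlast : lastColSpan G k' = dualCode CZ)
    (dX : ℕ)
    (hdX : IsLeast {w | ∃ c, c ∈ CX ∧ c ∉ dualCode CZ ∧ hammingNorm c = w} dX) :
    ∀ e : ℕ, 2 * e < dX ↔ DecodableFromErrors G k' e := by
  subst hGspan
  rw [← hlast] at hdX
  exact css_dX_iff_decodable_general (hk' ▸ Nat.sub_le _ _) G hGfullrank hdX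
end

section
/- Let F be a finite field and let C_X, C_Z ⊆ F^n be linear codes with C_Z^⊥ ⊆ C_X and C_X^⊥ ⊆ C_Z (i.e., (C_X, C_Z) is a CSS code). Let k = dim(C_X) and k' = k − dim(C_Z^⊥). Let G ∈ F^{n×k} be a generator matrix for C_X whose last k−k' columns form a basis for C_Z^⊥, and let Enc be the k'-randomized encoding map for G. Let d_Z be the minimum Hamming weight of a vector in C_Z \ C_X^⊥. Then for every t < n: d_Z > t if and only if Enc is t-ZK. -/
/-!
Fix a set `I` of coordinates. By linearity, the fibres of `r ↦ Enc(m)|_I` are translates of one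
another or empty, so `Enc` hides the message on `I` exactly when every codeword of `C_X` agrees on
`I` with a codeword of `C_Z^⊥`, that is, `C_X ≤ C_Z^⊥ ⊔ {u | u|_I = 0}`. Dualizing, this says that
every vector of `C_Z` supported in `I` lies in `C_X^⊥`. Letting `I` range over all sets of size `t`
turns the support condition into the weight bound `wt(c) ≤ t`.
-/

open LinearMap Module Matrix

theorem isRefl_dotProductBilin {R m : Type*} [CommSemiring R] [Fintype m] :
    BilinForm.IsRefl (dotProductBilin R R : (m → R) →ₗ[R] (m → R) →ₗ[R] R) := fun u v huv => by
  simpa [dotProduct_comm v] using huv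

theorem nondegenerate_dotProductBilin {R m : Type*} [CommSemiring R] [Fintype m] :
    (dotProductBilin R R : (m → R) →ₗ[R] (m → R) →ₗ[R] R).Nondegenerate :=
  ⟨fun u hu => dotProduct_eq_zero u hu,
    fun u hu => dotProduct_eq_zero u fun v => dotProduct_comm u v ▸ hu v⟩

section DualCode

variable {F : Type*} [Field F] {n : ℕ}

theorem mem_dualCode {W : Submodule F (Fin n → F)} {u : Fin n → F} :
    u ∈ dualCode W ↔ ∀ w ∈ W, u ⬝ᵥ w = 0 :=
  Iff.rfl

theorem dualCode_eq_orthogonalBilin (W : Submodule F (Fin n → F)) :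
    dualCode W = W.orthogonalBilin (dotProductBilin F F) := by
  ext u
  simp [mem_dualCode, dotProduct_comm u]

theorem dualCode_dualCode (W : Submodule F (Fin n → F)) : dualCode (dualCode W) = W := by
  simp only [dualCode_eq_orthogonalBilin]
  exact BilinForm.orthogonal_orthogonal nondegenerate_dotProductBilin isRefl_dotProductBilin W

theorem dualCode_antitone : Antitone (dualCode : Submodule F (Fin n → F) → _) :=
  fun _ _ h _ hu w hw => hu w (h hw)

theorem dualCode_le_dualCode_iff {V W : Submodule F (Fin n → F)} :
    dualCode V ≤ dualCode W ↔ W ≤ V :=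
  ⟨fun h => by simpa only [dualCode_dualCode] using dualCode_antitone h,
    fun h => dualCode_antitone h⟩

theorem dualCode_sup (V W : Submodule F (Fin n → F)) :
    dualCode (V ⊔ W) = dualCode V ⊓ dualCode W := by
  refine le_antisymm (le_inf (dualCode_antitone le_sup_left) (dualCode_antitone le_sup_right)) ?_
  rintro u ⟨hV, hW⟩ w hw
  obtain ⟨v, hv, v', hv', rfl⟩ := Submodule.mem_sup.mp hw
  change u ⬝ᵥ (v + v') = 0
  rw [dotProduct_add, mem_dualCode.mp hV v hv, mem_dualCode.mp hW v' hv', add_zero]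

theorem dualCode_pi_bot (I : Set (Fin n)) :
    dualCode (Submodule.pi I fun _ => (⊥ : Submodule F F)) = Submodule.pi Iᶜ fun _ => ⊥ := by
  ext u
  simp only [mem_dualCode, Submodule.mem_pi, Submodule.mem_bot, Set.mem_compl_iff]
  refine ⟨fun hu i hi => ?_, fun hu w hw => Finset.sum_eq_zero fun i _ => ?_⟩
  · have hsingle : ∀ j ∈ I, (Pi.single i 1 : Fin n → F) j = 0 := fun j hj =>
      Pi.single_eq_of_ne (ne_of_mem_of_not_mem hj hi) 1
    simpa using hu _ hsingle
  · by_cases hi : i ∈ I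
    · rw [hw i hi, mul_zero]
    · rw [hu i hi, zero_mul]

theorem le_sup_pi_bot_iff {V W : Submodule F (Fin n → F)} {I : Set (Fin n)} :
    V ≤ W ⊔ Submodule.pi I (fun _ => ⊥) ↔
      ∀ c ∈ dualCode W, (∀ i ∉ I, c i = 0) → c ∈ dualCode V := by
  rw [← dualCode_le_dualCode_iff, dualCode_sup, dualCode_pi_bot]
  simp [SetLike.le_def]

end DualCode

theorem hammingNorm_le_iff_exists_card_eq {ι α : Type*} [Fintype ι] [Zero α] [DecidableEq α]
    {t : ℕ} (ht : t ≤ Fintype.card ι) {c : ι → α} :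
    hammingNorm c ≤ t ↔ ∃ I : Finset ι, I.card = t ∧ ∀ i ∉ I, c i = 0 := by
  refine ⟨fun hc => ?_, ?_⟩
  · obtain ⟨I, hcI, hI⟩ := Finset.exists_superset_card_eq hc ht
    exact ⟨I, hI, fun i hi => by_contra fun hci => hi (hcI (by simpa using hci))⟩
  · rintro ⟨I, rfl, hcI⟩
    exact Finset.card_le_card fun i hi =>
      by_contra fun hiI => (Finset.mem_filter.mp hi).2 (hcI i hiI)

theorem card_fiber_eq_iff_range_le {S M R X : Type*} [Semiring S] [AddCommGroup M]
    [AddCommGroup R] [AddCommGroup X] [Module S M] [Module S R] [Module S X] [Finite R]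
    (f : M × R →ₗ[S] X) :
    (∀ m m' v, Nat.card {r // f (m, r) = v} = Nat.card {r // f (m', r) = v}) ↔
      range f ≤ range (f ∘ₗ inr S M R) := by
  constructor
  · rintro hcard _ ⟨⟨m, r⟩, rfl⟩
    have hpos : 0 < Nat.card {s // f (0, s) = f (m, r)} :=
      hcard m 0 _ ▸ Nat.card_pos_iff.mpr ⟨⟨r, rfl⟩, inferInstance⟩
    obtain ⟨s, hs⟩ := (Nat.card_pos_iff.mp hpos).1
    exact ⟨s, hs⟩
  · intro hle m m' v
    obtain ⟨s, hs : f (0, s) = f (m - m', 0)⟩ := hle (mem_range_self f (m - m', 0))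
    have hshift (r : R) : f (m', s + r) = f (m, r) := by
      calc f (m', s + r) = f (0, s) + f (m', r) := by simp [← map_add]
        _ = f (m, r) := by simp [hs, ← map_add]
    exact Nat.card_congr ((Equiv.addLeft s).subtypeEquiv fun r => by simp [hshift])

theorem ker_funLeft_subtypeVal {R M ι : Type*} [Semiring R] [AddCommMonoid M] [Module R M]
    (s : Set ι) :
    ker (funLeft R M (Subtype.val : s → ι)) = Submodule.pi s fun _ => ⊥ := by
  ext u
  simp [funext_iff, funLeft_apply]

section Concat

variable {R : Type*} [Semiring R] {k k' : ℕ}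

/-- The concatenation `(m, r) ↦ concat m r` as a linear map on pairs of a message and a
randomness vector; for `k < k'` it truncates `m` to its first `k` entries. -/
def concatLinearMap (R : Type*) [Semiring R] (k k' : ℕ) :
    (Fin k' → R) × (Fin (k - k') → R) →ₗ[R] (Fin k → R) where
  toFun p := concat p.1 p.2
  map_add' p q := by
    ext j
    by_cases hj : (j : ℕ) < k' <;> simp [concat, hj]
  map_smul' a p := by
    ext j
    by_cases hj : (j : ℕ) < k' <;> simp [concat, hj]

theorem range_concatLinearMap (hk : k' ≤ k) : range (concatLinearMap R k k') = ⊤ := by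
  refine range_eq_top.mpr fun y =>
    ⟨(fun i => y (i.castLE hk), fun i => y ⟨k' + i, by lia⟩), funext fun j => ?_⟩
  by_cases hj : (j : ℕ) < k'
  · simp [concatLinearMap, concat, hj]
  · simp [concatLinearMap, concat, hj, Nat.add_sub_cancel' (not_lt.mp hj)]

theorem concat_zero_single (i : Fin (k - k')) :
    concat (0 : Fin k' → R) (Pi.single i 1) = Pi.single ⟨k' + i, by lia⟩ 1 := by
  ext j
  simp only [concat, Pi.single_apply, Fin.ext_iff, Pi.zero_apply]
  split_ifs <;> first | rfl | lia

end Concat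

section Encode

/-- The randomized encoding map `(m, r) ↦ G·(m,r)`, linear in the message and the randomness
jointly; `Enc(m)` is the image of a uniformly random `r` under `encode G k' (m, ·)`. -/
def encode {R : Type*} [CommSemiring R] {ι : Type*} {k : ℕ} (G : Matrix ι (Fin k) R) (k' : ℕ) :
    (Fin k' → R) × (Fin (k - k') → R) →ₗ[R] (ι → R) :=
  G.mulVecLin ∘ₗ concatLinearMap R k k'

theorem range_encode {R : Type*} [CommSemiring R] {ι : Type*} {k k' : ℕ} (hk : k' ≤ k)
    (G : Matrix ι (Fin k) R) : range (encode G k') = range G.mulVecLin :=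
  range_comp_of_range_eq_top _ (range_concatLinearMap hk)

theorem encode_zero_single {R : Type*} [CommSemiring R] {ι : Type*} {k k' : ℕ}
    (G : Matrix ι (Fin k) R) (i : Fin (k - k')) :
    encode G k' (0, Pi.single i 1) = G.col ⟨k' + i, by lia⟩ := by
  simp [encode, concatLinearMap, concat_zero_single]

variable {F : Type*} [Field F] {n k : ℕ}

theorem range_encode_comp_inr (G : Matrix (Fin n) (Fin k) F) (k' : ℕ) :
    range (encode G k' ∘ₗ inr F _ _) = lastColSpan G k' := by
  rw [range_eq_map, ← (Pi.basisFun F (Fin (k - k'))).span_eq, Submodule.map_span,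
    ← Set.range_comp, lastColSpan]
  congr 1
  ext v
  simp only [Set.mem_range, Function.comp_apply, Pi.basisFun_apply, LinearMap.comp_apply,
    LinearMap.inr_apply, encode_zero_single]
  constructor
  · rintro ⟨i, rfl⟩
    exact ⟨_, Nat.le_add_right k' i, rfl⟩
  · rintro ⟨j, hj, rfl⟩
    exact ⟨⟨j - k', by lia⟩, congrArg G.col (Fin.ext (Nat.add_sub_cancel' hj))⟩

theorem isZK_iff_range_mulVecLin_le [Finite F] {k' t : ℕ} (hk : k' ≤ k)
    (G : Matrix (Fin n) (Fin k) F) :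
    IsZK G k' t ↔ ∀ I : Finset (Fin n), I.card = t →
      range G.mulVecLin ≤ lastColSpan G k' ⊔ Submodule.pi (I : Set (Fin n)) fun _ => ⊥ := by
  refine forall₂_congr fun I _ => ?_
  have hfiber := card_fiber_eq_iff_range_le
    (funLeft F F (Subtype.val : ↥(I : Set (Fin n)) → Fin n) ∘ₗ encode G k')
  rw [comp_assoc, range_comp, range_comp, range_encode hk, range_encode_comp_inr,
    LinearMap.map_le_map_iff, ker_funLeft_subtypeVal] at hfiber
  rw [← hfiber]
  simp only [funext_iff]
  rfl

end Encode

theorem css_dZ_iff_zk_general {F : Type*} [Field F] [Finite F] [DecidableEq F] {n k k' t : ℕ}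
    (hk : k' ≤ k) (ht : t ≤ n) (G : Matrix (Fin n) (Fin k) F) :
    (∀ c ∈ dualCode (lastColSpan G k'), c ∉ dualCode (range G.mulVecLin) → t < hammingNorm c) ↔
      IsZK G k' t := by
  have hweight (c : Fin n → F) := hammingNorm_le_iff_exists_card_eq (c := c)
    (ht.trans_eq (Fintype.card_fin n).symm)
  simp only [isZK_iff_range_mulVecLin_le hk, le_sup_pi_bot_iff, ← not_le, hweight, Finset.mem_coe]
  grind

/-- Let `(C_X, C_Z)` be a CSS code (`C_Z^⊥ ⊆ C_X` and `C_X^⊥ ⊆ C_Z`),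
let `k = dim C_X`, `k' = k - dim C_Z^⊥`, and let `G` be a generator matrix for `C_X` whose
last `k - k'` columns form a basis for `C_Z^⊥`. With `d_Z` the minimum Hamming weight of a
vector in `C_Z \ C_X^⊥`: for every `t < n`, `d_Z > t` iff the `k'`-randomized encoding map
for `G` is `t`-zero-knowledge. -/
theorem css_dZ_iff_zk
    {F : Type*} [Field F] [Fintype F] [DecidableEq F] {n : ℕ}
    (CX CZ : Submodule F (Fin n → F))
    (hZX : dualCode CZ ≤ CX) (hXZ : dualCode CX ≤ CZ)
    (k k' : ℕ)
    (hk : k = Module.finrank F CX)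
    (hk' : k' = k - Module.finrank F (dualCode CZ))
    (G : Matrix (Fin n) (Fin k) F)
    (hGfullrank : Function.Injective G.mulVecLin)
    (hGspan : LinearMap.range G.mulVecLin = CX)
    (hlast : lastColSpan G k' = dualCode CZ)
    (dZ : ℕ)
    (hdZ : IsLeast {w | ∃ c, c ∈ CZ ∧ c ∉ dualCode CX ∧ hammingNorm c = w} dZ) :
    ∀ t : ℕ, t < n → (t < dZ ↔ IsZK G k' t) := by
  intro t ht
  rw [← css_dZ_iff_zk_general (by lia) ht.le, hlast, dualCode_dualCode, hGspan, hdZ.lt_iff]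
  aesop
end
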